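/- Let ℓ > 0 and x ∈ S. Then u_ℓ(x) = min_{λ∈Δᵐ} sup_{y∈S} Σ_{i=1}^m λ_i ( F_i(x) − F_i(y) − (ℓ/2)‖x − y‖² ), and the minimum over Δᵐ on the right-hand side is attained. -/

import Mathlib

/-- The regularized merit function
`u_ℓ(x) = max_{y ∈ S} min_i (F i x - F i y - (ℓ/2)‖x - y‖²)`. -/
noncomputable def meritU {n m : ℕ} (ℓ : ℝ) (S : Set (EuclideanSpace ℝ (Fin n)))
    (F : Fin m → EuclideanSpace ℝ (Fin n) → ℝ)
    (x : EuclideanSpace ℝ (Fin n)) : ℝ :=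
  sSup ((fun y => ⨅ i, (F i x - F i y - ℓ / 2 * ‖x - y‖ ^ 2)) '' S)

/-- The weighted dual value `λ ↦ sup_{y ∈ S} Σ_i λ_i (F i x - F i y - (ℓ/2)‖x - y‖²)`. -/
noncomputable def dualValU {n m : ℕ} (ℓ : ℝ) (S : Set (EuclideanSpace ℝ (Fin n)))
    (F : Fin m → EuclideanSpace ℝ (Fin n) → ℝ)
    (x : EuclideanSpace ℝ (Fin n)) (lam : Fin m → ℝ) : ℝ :=
  sSup ((fun y => ∑ i, lam i * (F i x - F i y - ℓ / 2 * ‖x - y‖ ^ 2)) '' S)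

theorem aux_bdd {n : ℕ} (F : EuclideanSpace ℝ (Fin n) → ℝ) (hF : ConvexOn ℝ Set.univ F)
    (ℓ : ℝ) (hℓ : 0 < ℓ) (x : EuclideanSpace ℝ (Fin n)) :
    ∃ B : ℝ, ∀ y, F x - F y - ℓ / 2 * ‖x - y‖ ^ 2 ≤ B := by
  have hc : ContinuousOn F Set.univ := hF.continuousOn isOpen_univ
  obtain ⟨p, hp, hmin⟩ := (isCompact_closedBall x 1).exists_isMinOn
    ⟨x, Metric.mem_closedBall_self zero_le_one⟩ (hc.mono (Set.subset_univ _))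
  have hK0 : F p ≤ F x := hmin (Metric.mem_closedBall_self zero_le_one)
  set K := F x - F p with hK
  have hK' : 0 ≤ K := by linarith
  refine ⟨K + K ^ 2 / (2 * ℓ), fun y => ?_⟩
  have key : F x - F y ≤ K * (1 + ‖x - y‖) := by
    by_cases h : ‖x - y‖ ≤ 1
    · have : F p ≤ F y := hmin (by rw [Metric.mem_closedBall, dist_comm, dist_eq_norm]; exact h)
      nlinarith [norm_nonneg (x - y)]
    · push Not at h
      set r := ‖x - y‖ with hr
      have hr0 : 0 < r := by linarith
      have hi : r⁻¹ ≤ 1 := inv_le_one_of_one_le₀ h.le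
      have hi0 : 0 < r⁻¹ := inv_pos.mpr hr0
      have hq := hF.2 (Set.mem_univ x) (Set.mem_univ y) (by linarith : 0 ≤ 1 - r⁻¹) hi0.le
        (by ring)
      have hb : F p ≤ F ((1 - r⁻¹) • x + r⁻¹ • y) := by
        apply hmin
        rw [Metric.mem_closedBall, dist_comm, dist_eq_norm]
        have : x - ((1 - r⁻¹) • x + r⁻¹ • y) = r⁻¹ • (x - y) := by module
        rw [this, norm_smul, Real.norm_of_nonneg hi0.le, ← hr, inv_mul_cancel₀ hr0.ne']
      simp only [smul_eq_mul] at hq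
      have h3 : r⁻¹ * (F x - F y) ≤ K := by linarith
      have h4 : F x - F y ≤ K * r := by
        have := mul_le_mul_of_nonneg_left h3 hr0.le
        rw [← mul_assoc, mul_inv_cancel₀ hr0.ne'] at this
        linarith
      linarith
  have h5 : K * ‖x - y‖ - ℓ / 2 * ‖x - y‖ ^ 2 ≤ K ^ 2 / (2 * ℓ) := by
    rw [le_div_iff₀ (by positivity)]
    nlinarith [sq_nonneg (K - ℓ * ‖x - y‖)]
  linarith

theorem aux_concave {n : ℕ} (F : EuclideanSpace ℝ (Fin n) → ℝ) (hF : ConvexOn ℝ Set.univ F)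
    (ℓ : ℝ) (hℓ : 0 < ℓ) (x : EuclideanSpace ℝ (Fin n)) :
    ConcaveOn ℝ Set.univ (fun y => F x - F y - ℓ / 2 * ‖x - y‖ ^ 2) := by
  have h1 : ConvexOn ℝ Set.univ (fun y : EuclideanSpace ℝ (Fin n) => ‖x - y‖ ^ 2) := by
    have h0 : ConvexOn ℝ Set.univ (fun y : EuclideanSpace ℝ (Fin n) => dist y x) :=
      convexOn_univ_dist x
    have := h0.pow (fun _ _ => dist_nonneg) 2
    refine this.congr fun y _ => ?_
    simp [dist_eq_norm, norm_sub_rev]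
  have h2 := h1.smul (by positivity : 0 ≤ ℓ / 2)
  exact ((concaveOn_const (F x) convex_univ).sub hF).sub h2

theorem aux_sep {E : Type*} [AddCommGroup E] [Module ℝ E] {m : ℕ} (hm : 0 < m) (S : Set E)
    (hS : S.Nonempty) (hSc : Convex ℝ S)
    (g : Fin m → E → ℝ) (hg : ∀ i, ConcaveOn ℝ S (g i)) (v : ℝ)
    (hv : ∀ y ∈ S, ∃ i, g i y ≤ v) :
    ∃ lam ∈ stdSimplex ℝ (Fin m), ∀ y ∈ S, ∑ i, lam i * g i y ≤ v := by
  let C : Set (Fin m → ℝ) := {z | ∃ y ∈ S, ∀ i, z i < g i y - v}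
  have hCo : IsOpen C := by
    have : C = ⋃ y ∈ S, Set.pi Set.univ (fun i => Set.Iio (g i y - v)) := by
      ext z; simp [C]
    rw [this]
    exact isOpen_biUnion fun y _ => isOpen_set_pi Set.finite_univ fun i _ => isOpen_Iio
  have hCc : Convex ℝ C := by
    rintro z ⟨y, hy, hz⟩ w ⟨y', hy', hw⟩ a b ha hb hab
    refine ⟨a • y + b • y', hSc hy hy' ha hb hab, fun i => ?_⟩
    have h1 := (hg i).2 hy hy' ha hb hab
    simp only [smul_eq_mul, Pi.add_apply, Pi.smul_apply] at h1 ⊢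
    have h2 : a * z i + b * w i < a * (g i y - v) + b * (g i y' - v) := by
      rcases ha.eq_or_lt with h | h
      · subst h
        have : b = 1 := by linarith
        subst this
        linarith [hw i]
      · have := mul_lt_mul_of_pos_left (hz i) h
        have := mul_le_mul_of_nonneg_left (hw i).le hb
        linarith
    have h3 : a * (g i y - v) + b * (g i y' - v) = a * g i y + b * g i y' - v := by
      linear_combination (-v) * hab
    linarith
  have h0 : (0 : Fin m → ℝ) ∉ C := by
    rintro ⟨y, hy, h⟩
    obtain ⟨i, hi⟩ := hv y hy
    have := h i
    simp at this
    linarith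
  obtain ⟨f, hf⟩ := geometric_hahn_banach_open_point hCc hCo h0
  simp only [map_zero] at hf
  let c : Fin m → ℝ := fun i => f (Pi.single i 1)
  have hfc : ∀ z, f z = ∑ i, c i * z i := by
    intro z
    have hz : z = ∑ i, z i • (Pi.single i 1 : Fin m → ℝ) := by
      ext j; simp [Finset.sum_apply, Pi.single_apply]
    conv_lhs => rw [hz]
    rw [map_sum]
    exact Finset.sum_congr rfl fun i _ => by rw [map_smul, smul_eq_mul, mul_comm]
  obtain ⟨y0, hy0⟩ := hS
  let z0 : Fin m → ℝ := fun i => g i y0 - v - 1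
  have hz0 : z0 ∈ C := ⟨y0, hy0, fun i => by simp [z0]⟩
  have hc : ∀ i, 0 ≤ c i := by
    intro i
    by_contra hi
    push Not at hi
    have hlt := hf z0 hz0
    have ht : 0 < f z0 / c i := div_pos_of_neg_of_neg hlt hi
    have : z0 - (f z0 / c i) • (Pi.single i 1 : Fin m → ℝ) ∈ C := by
      refine ⟨y0, hy0, fun j => ?_⟩
      have : (0:ℝ) ≤ (Pi.single i 1 : Fin m → ℝ) j := by
        rw [Pi.single_apply]; split_ifs <;> norm_num
      have := mul_nonneg ht.le this
      simp only [Pi.sub_apply, Pi.smul_apply, smul_eq_mul, z0] at this ⊢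
      linarith
    have h := hf _ this
    rw [map_sub, map_smul, smul_eq_mul] at h
    change f z0 - f z0 / c i * c i < 0 at h
    rw [div_mul_cancel₀ _ hi.ne] at h
    linarith
  have hs : 0 < ∑ i, c i := by
    refine lt_of_le_of_ne (Finset.sum_nonneg fun i _ => hc i) fun h => ?_
    have h' := (Finset.sum_eq_zero_iff_of_nonneg (fun i _ => hc i)).1 h.symm
    have := hf z0 hz0
    rw [hfc, Finset.sum_eq_zero (fun i hi => by rw [h' i hi, zero_mul])] at this
    exact lt_irrefl _ this
  set s := ∑ i, c i with hsdef
  refine ⟨fun i => c i / s, ⟨fun i => div_nonneg (hc i) hs.le, ?_⟩, fun y hy => ?_⟩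
  · rw [← Finset.sum_div, div_self hs.ne']
  · have h1 : ∀ ε > 0, ∑ i, c i * g i y ≤ s * v + ε * s := by
      intro ε hε
      have := hf (fun i => g i y - v - ε) ⟨y, hy, fun i => by linarith⟩
      rw [hfc] at this
      simp only [mul_sub, Finset.sum_sub_distrib, ← Finset.sum_mul] at this
      linarith
    have h2 : ∑ i, c i * g i y ≤ s * v := by
      apply le_of_forall_pos_le_add
      intro ε hε
      have := h1 (ε / s) (div_pos hε hs)
      rwa [div_mul_cancel₀ _ hs.ne'] at this
    have : ∑ i, c i / s * g i y = (∑ i, c i * g i y) / s := by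
      rw [Finset.sum_div]; exact Finset.sum_congr rfl fun i _ => by ring
    rw [this, div_le_iff₀ hs]
    linarith

/-- minimax (Sion) representation of `u_ℓ`:
`u_ℓ(x) = min_{λ ∈ Δᵐ} sup_{y ∈ S} Σ_i λ_i (F i x - F i y - (ℓ/2)‖x - y‖²)`, with the
minimum over the standard simplex attained. -/
theorem meritU_minimax {n m : ℕ} (hm : 0 < m)
    (S : Set (EuclideanSpace ℝ (Fin n))) (hS : S.Nonempty)
    (hSclosed : IsClosed S) (hSconv : Convex ℝ S)
    (F : Fin m → EuclideanSpace ℝ (Fin n) → ℝ)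
    (hFconv : ∀ i, ConvexOn ℝ Set.univ (F i))
    (ℓ : ℝ) (hℓ : 0 < ℓ)
    (x : EuclideanSpace ℝ (Fin n)) (hx : x ∈ S) :
    ∃ lam ∈ stdSimplex ℝ (Fin m),
      meritU ℓ S F x = dualValU ℓ S F x lam ∧
      ∀ lam' ∈ stdSimplex ℝ (Fin m), dualValU ℓ S F x lam ≤ dualValU ℓ S F x lam' := by
  classical
  haveI : Nonempty (Fin m) := ⟨⟨0, hm⟩⟩
  let g : Fin m → EuclideanSpace ℝ (Fin n) → ℝ :=
    fun i y => F i x - F i y - ℓ / 2 * ‖x - y‖ ^ 2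
  choose B hB using fun i => aux_bdd (F i) (hFconv i) ℓ hℓ x
  have hgB : ∀ i y, g i y ≤ B i := hB
  have hmU : meritU ℓ S F x = sSup ((fun y => ⨅ i, g i y) '' S) := rfl
  have hdU : ∀ lam, dualValU ℓ S F x lam = sSup ((fun y => ∑ i, lam i * g i y) '' S) :=
    fun _ => rfl
  have hinf : ∀ y i, (⨅ i, g i y) ≤ g i y := fun y i => ciInf_le (Set.finite_range _).bddBelow i
  have hbdd : BddAbove ((fun y => ⨅ i, g i y) '' S) := by
    refine ⟨B ⟨0, hm⟩, ?_⟩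
    rintro _ ⟨y, _, rfl⟩
    exact (hinf y ⟨0, hm⟩).trans (hgB _ y)
  have hlow : ∀ lam ∈ stdSimplex ℝ (Fin m), meritU ℓ S F x ≤ dualValU ℓ S F x lam := by
    intro lam hlam
    rw [hmU, hdU]
    refine csSup_le (hS.image _) ?_
    rintro _ ⟨y, hy, rfl⟩
    have hb : BddAbove ((fun y => ∑ i, lam i * g i y) '' S) := by
      refine ⟨∑ i, lam i * B i, ?_⟩
      rintro _ ⟨y, _, rfl⟩
      exact Finset.sum_le_sum fun i _ => mul_le_mul_of_nonneg_left (hgB i y) (hlam.1 i)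
    refine le_trans ?_ (le_csSup hb ⟨y, hy, rfl⟩)
    calc (⨅ i, g i y) = ∑ i, lam i * (⨅ i, g i y) := by rw [← Finset.sum_mul, hlam.2, one_mul]
      _ ≤ _ := Finset.sum_le_sum fun i _ => mul_le_mul_of_nonneg_left (hinf y i) (hlam.1 i)
  obtain ⟨lam, hlam, h⟩ := aux_sep hm S hS hSconv g
    (fun i => (aux_concave (F i) (hFconv i) ℓ hℓ x).subset (Set.subset_univ _) hSconv)
    (meritU ℓ S F x) (fun y hy => by
      obtain ⟨i, hi⟩ := exists_eq_ciInf_of_finite (f := fun i => g i y)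
      refine ⟨i, ?_⟩
      rw [hmU]
      exact hi.le.trans (le_csSup hbdd ⟨y, hy, rfl⟩))
  have hup : dualValU ℓ S F x lam ≤ meritU ℓ S F x := by
    rw [hdU]
    refine csSup_le (hS.image _) ?_
    rintro _ ⟨y, hy, rfl⟩
    exact h y hy
  exact ⟨lam, hlam, le_antisymm (hlow lam hlam) hup, fun lam' h' => hup.trans (hlow lam' h')⟩
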